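/- Let B ⊂ ℝ³ be open, f = (f⁴,…,f⁷): B → ℝ⁴ and A = (A¹,A²,A³): B → ℝ³ smooth, with v_j(x), F_∇^S, F_∇^B and F_∇ = F_∇^B + F_∇^S as in the context. Then the following are equivalent: (1) *₇φ(v₁(x),v₂(x),v₃(x),·) = 0 for every x ∈ B (the graph S is associative with an appropriate orientation) and F_∇^B = 0 (∇^B is flat); (2) F_∇³/6 + F_∇ ∧ *₇φ = 0 at every point; (3) F_∇³/6 + F_∇ ∧ *₇φ = 0 and φ ∧ *₇(F_∇²) = 0 at every point. -/

import Mathlib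

open scoped BigOperators

noncomputable section

namespace FMpaper

variable {K : Type*} [NormedField K] [NormedAlgebra ℝ K]

/-- Coefficient model for the exterior algebra of `(ℝⁿ)*` with scalars in `K`:
a form is given by its coefficients on the basis `e^S`, `S ⊆ {0, …, n-1}` sorted. -/
abbrev Form (K : Type*) (n : ℕ) := Finset (Fin n) → K

variable {n : ℕ}

/-- Sign such that `e^s ∧ e^t = signMerge s t • e^(s ∪ t)` for disjoint sorted `s, t`. -/
def signMerge (s t : Finset (Fin n)) : K :=
  (-1 : K) ^ (((s ×ˢ t).filter (fun p => p.2 < p.1)).card)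

/-- Wedge product. -/
def wedge (α β : Form K n) : Form K n :=
  fun u => ∑ s ∈ u.powerset, signMerge s (u \ s) * α s * β (u \ s)

/-- Hodge star operator (for the standard inner product and orientation `e^{0⋯(n-1)}`). -/
def hstar (α : Form K n) : Form K n :=
  fun t => signMerge tᶜ t * α tᶜ

/-- Interior product with the basis vector `e_μ`. -/
def iprodB (μ : Fin n) (α : Form K n) : Form K n :=
  fun t => if μ ∈ t then 0
    else (-1 : K) ^ ((t.filter (fun j => j < μ)).card) * α (insert μ t)

/-- Interior product with the vector `v`. -/
def iprod (v : Fin n → K) (α : Form K n) : Form K n :=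
  fun t => ∑ μ, v μ * iprodB μ α t

/-- The basis covector `e^i` as a 1-form. -/
def e1 (i : Fin n) : Form K n := fun s => if s = {i} then 1 else 0

/-- The covector `v♭` dual to a vector `v`. -/
def flat (v : Fin n → K) : Form K n := ∑ i, v i • e1 i

/-- The vector `α♯` dual to a 1-form `α`. -/
def sharp1 (α : Form K n) : Fin n → K := fun i => α {i}

/-- The inner product of forms (extended `K`-bilinearly). -/
def inner' (α β : Form K n) : K := ∑ s, α s * β s

/-- The (Euclidean) norm of a form; for an `√-1 ℝ`-valued form `√-1 γ` this is `‖γ‖`. -/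
def fnorm (α : Form K n) : ℝ := Real.sqrt (∑ s, ‖α s‖ ^ 2)

/-- `α` is homogeneous of degree `k`. -/
def isGrade (k : ℕ) (α : Form K n) : Prop := ∀ s, s.card ≠ k → α s = 0

/-- Evaluation of a `k`-form on `k` vectors. -/
def evalForm {k : ℕ} (α : Form K n) (v : Fin k → (Fin n → K)) : K :=
  ∑ s : Finset (Fin n), α s *
    (if h : s.card = k then
      Matrix.det (Matrix.of fun i j => v i ((s.orderIsoOfFin h j : Fin n))) else 0)

/-- The matrix of the skew-symmetric endomorphism `γ♯` associated with a 2-form `γ`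
via `⟨γ♯ u, v⟩ = γ(u, v)`. -/
def mat2 (γ : Form K n) : Matrix (Fin n) (Fin n) K :=
  Matrix.of fun i j => if i < j then γ {i, j} else if j < i then - γ {i, j} else 0

/-- The standard `G₂` 3-form `φ = e^{123}+e^{145}+e^{167}+e^{246}−e^{257}−e^{347}−e^{356}`
on `ℝ⁷` (indices `1, …, 7` shifted to `0, …, 6`). -/
def phi7 : Form K 7 := fun s =>
  if s = ({0, 1, 2} : Finset (Fin 7)) then 1
  else if s = ({0, 3, 4} : Finset (Fin 7)) then 1
  else if s = ({0, 5, 6} : Finset (Fin 7)) then 1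
  else if s = ({1, 3, 5} : Finset (Fin 7)) then 1
  else if s = ({1, 4, 6} : Finset (Fin 7)) then -1
  else if s = ({2, 3, 6} : Finset (Fin 7)) then -1
  else if s = ({2, 4, 5} : Finset (Fin 7)) then -1
  else 0

/-- `*₇φ = e^{4567}+e^{2367}+e^{2345}+e^{1357}−e^{1346}−e^{1256}−e^{1247}` on `ℝ⁷`. -/
def psi7 : Form K 7 := fun s =>
  if s = ({3, 4, 5, 6} : Finset (Fin 7)) then 1
  else if s = ({1, 2, 5, 6} : Finset (Fin 7)) then 1
  else if s = ({1, 2, 3, 4} : Finset (Fin 7)) then 1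
  else if s = ({0, 2, 4, 6} : Finset (Fin 7)) then 1
  else if s = ({0, 2, 3, 5} : Finset (Fin 7)) then -1
  else if s = ({0, 1, 4, 5} : Finset (Fin 7)) then -1
  else if s = ({0, 1, 3, 6} : Finset (Fin 7)) then -1
  else 0

/-- The `G₂` 3-form `φ` on `V = span{e₁, …, e₇} ⊂ ℝ⁸`, regarded as a form on `ℝ⁸`
annihilated by `i(e₀)` (indices `1, …, 7` of `ℝ⁸`). -/
def phi8 : Form K 8 := fun s =>
  if s = ({1, 2, 3} : Finset (Fin 8)) then 1
  else if s = ({1, 4, 5} : Finset (Fin 8)) then 1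
  else if s = ({1, 6, 7} : Finset (Fin 8)) then 1
  else if s = ({2, 4, 6} : Finset (Fin 8)) then 1
  else if s = ({2, 5, 7} : Finset (Fin 8)) then -1
  else if s = ({3, 4, 7} : Finset (Fin 8)) then -1
  else if s = ({3, 5, 6} : Finset (Fin 8)) then -1
  else 0

/-- `*₇φ` on `V ⊂ ℝ⁸`, regarded as a 4-form on `ℝ⁸` annihilated by `i(e₀)`. -/
def psi8 : Form K 8 := fun s =>
  if s = ({4, 5, 6, 7} : Finset (Fin 8)) then 1
  else if s = ({2, 3, 6, 7} : Finset (Fin 8)) then 1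
  else if s = ({2, 3, 4, 5} : Finset (Fin 8)) then 1
  else if s = ({1, 3, 5, 7} : Finset (Fin 8)) then 1
  else if s = ({1, 3, 4, 6} : Finset (Fin 8)) then -1
  else if s = ({1, 2, 5, 6} : Finset (Fin 8)) then -1
  else if s = ({1, 2, 4, 7} : Finset (Fin 8)) then -1
  else 0

/-- The standard Cayley 4-form `Φ = e⁰ ∧ φ + *₇φ` on `ℝ⁸`. -/
def Phi8 : Form K 8 := wedge (e1 0) phi8 + psi8

/-- The index set of `V = span{e₁, …, e₇} ⊂ ℝ⁸`. -/
def Vset : Finset (Fin 8) := {1, 2, 3, 4, 5, 6, 7}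

/-- The Hodge star `*₇` of `V ⊂ ℝ⁸` (volume form `e^{1⋯7}`), acting on forms on `ℝ⁸`
annihilated by `i(e₀)`. -/
def star7 (α : Form K 8) : Form K 8 :=
  fun t => if (0 : Fin 8) ∈ t then 0 else signMerge (Vset \ t) t * α (Vset \ t)

/-- `α` is (the pullback of) a form on `V`, i.e. `i(e₀) α = 0`. -/
def onV (α : Form K 8) : Prop := ∀ s, (0 : Fin 8) ∈ s → α s = 0

/-- `λ²(α) = ½ (e⁰ ∧ α + i(α♯) φ)` for `α ∈ V*`. -/
def lambda2 (α : Form K 8) : Form K 8 :=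
  (2 : K)⁻¹ • (wedge (e1 0) α + iprod (sharp1 α) phi8)

/-- `λ⁴(α) = (1/√8) (e⁰ ∧ i(α♯) *₇φ − α ∧ φ)` for `α ∈ V*`. -/
def lambda4 (α : Form K 8) : Form K 8 :=
  (algebraMap ℝ K (Real.sqrt 8))⁻¹ • (wedge (e1 0) (iprod (sharp1 α) psi8) - wedge α phi8)

/-- `λ⁶(α) = *₈ λ²(α)` for `α ∈ V*`. -/
def lambda6 (α : Form K 8) : Form K 8 := hstar (lambda2 α)

/-- The projection `π²₇(α) = (α + *₈(Φ ∧ α))/4` onto `Λ²₇`. -/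
def pi27 (α : Form K 8) : Form K 8 := (4 : K)⁻¹ • (α + hstar (wedge Phi8 α))

/-- The projection `π⁴₇(β) = Σ_{μ=1}^{7} ⟨β, λ⁴(e^μ)⟩ λ⁴(e^μ)` onto `Λ⁴₇`. -/
def pi47 (β : Form K 8) : Form K 8 :=
  ∑ μ : Fin 7, inner' β (lambda4 (e1 μ.succ)) • lambda4 (e1 μ.succ)

/-- `τ(u₀,u₁,u₂,u₃) = Σ_{μ=1}^{7} λ⁴(e^μ)(u₀,u₁,u₂,u₃) ⬝ λ⁴(e^μ) = π⁴₇(u₀♭∧u₁♭∧u₂♭∧u₃♭)`. -/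
def tau4 (u : Fin 4 → (Fin 8 → K)) : Form K 8 :=
  ∑ μ : Fin 7, evalForm (lambda4 (e1 μ.succ)) u • lambda4 (e1 μ.succ)

/-- Partial derivative `∂f^a/∂x^j` at `x`. -/
def pd {m p : ℕ} (f : (Fin m → ℝ) → (Fin p → ℝ)) (x : Fin m → ℝ) (j : Fin m) (a : Fin p) : ℝ :=
  fderiv ℝ f x (Pi.single j 1) a


/-! Graph setting for coassociative `T⁴`-fibrations: `ℝ⁷ = ℝ³ × ℝ⁴` with coordinates
`(x¹,x²,x³,y⁴,…,y⁷)`. -/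

/-- The index of the coordinate `x^j` (`j = 1,2,3` shifted to `0,1,2`) in `ℝ⁷`. -/
def xj (j : Fin 3) : Fin 7 := Fin.castAdd 4 j

/-- The index of the coordinate `y^a` (`a = 4,…,7` shifted to `0,…,3`) in `ℝ⁷`. -/
def ya (a : Fin 4) : Fin 7 := a.addNat 3

/-- The spanning tangent vectors `v_j = ∂_j + Σ_a (∂f^a/∂x^j) ∂_a` of the graph of `f`. -/
def vA (f : (Fin 3 → ℝ) → (Fin 4 → ℝ)) (x : Fin 3 → ℝ) (j : Fin 3) : Fin 7 → ℝ :=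
  Pi.single (xj j) 1 + ∑ a : Fin 4, pd f x j a • (Pi.single (ya a) 1 : Fin 7 → ℝ)

/-- The real 2-form `γ` with `F_∇^S = √-1 γ`, i.e. `γ = Σ_{j,a} (∂f^a/∂x^j) dx^j ∧ dy^a`. -/
def gammaA (f : (Fin 3 → ℝ) → (Fin 4 → ℝ)) (x : Fin 3 → ℝ) : Form ℝ 7 :=
  ∑ j : Fin 3, ∑ a : Fin 4, pd f x j a • wedge (e1 (xj j)) (e1 (ya a))

/-- The `√-1 ℝ`-valued curvature 2-form
`F_∇^S = √-1 Σ_{j,a} (∂f^a/∂x^j) dx^j ∧ dy^a` of the real Fourier–Mukai transform. -/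
def FSA (f : (Fin 3 → ℝ) → (Fin 4 → ℝ)) (x : Fin 3 → ℝ) : Form ℂ 7 :=
  fun s => Complex.I * (gammaA f x s : ℂ)

/-- The real 2-form `γ^B` with `F_∇^B = √-1 γ^B`, i.e.
`γ^B = Σ_{i,j} (∂A^j/∂x^i) dx^i ∧ dx^j`. -/
def gammaB7 (A : (Fin 3 → ℝ) → (Fin 3 → ℝ)) (x : Fin 3 → ℝ) : Form ℝ 7 :=
  ∑ i : Fin 3, ∑ j : Fin 3, pd A x i j • wedge (e1 (xj i)) (e1 (xj j))

/-- The `√-1 ℝ`-valued curvature `F_∇^B = √-1 Σ_{i,j} (∂A^j/∂x^i) dx^i ∧ dx^j`. -/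
def FB7 (A : (Fin 3 → ℝ) → (Fin 3 → ℝ)) (x : Fin 3 → ℝ) : Form ℂ 7 :=
  fun s => Complex.I * (gammaB7 A x s : ℂ)

/-!
Write `F = F_∇` as `√-1 (b + ∑ ∂_j f^a dx^j ∧ dy^a)` with `b` a form on the base, and let `c` be the
matrix `∂_j f^a`. In `F³/6 + F ∧ *φ = 0`, the coefficients omitting a `dx^j` are those of `b`,
since `F³` has none: `F` is isotropic on the fibres. The coefficients omitting a `dy^a` are, up to
sign, the entries of the Fueter operator of `c` (from `F ∧ *φ`) minus the maximal minors of `c`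
(from `F³/6`, the minus sign being that of `(√-1)³`). So the equation says that `b = 0` and that the
Fueter operator of `c` equals the cross product of the rows of `c`, which is the equation of
Harvey and Lawson for associative graphs. Once `b = 0`, the coefficients of `φ ∧ *(F²)` are the
pairings of the Fueter operator of `c` with the rows of `c`. They vanish because the cross product
is orthogonal to each of the vectors it is formed from.
-/

section ExteriorAlgebra

variable {𝕜 : Type*} [NormedField 𝕜]

lemma signMerge_insert_left {i : Fin n} {s : Finset (Fin n)} (hi : i ∉ s) (t : Finset (Fin n)) :
    (signMerge (insert i s) t : 𝕜) = (-1) ^ (t.filter (· < i)).card * signMerge s t := by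
  simp only [signMerge, Finset.card_filter, Finset.sum_product, Finset.sum_insert hi, pow_add]

lemma signMerge_insert_right {i : Fin n} {t : Finset (Fin n)} (hi : i ∉ t) (s : Finset (Fin n)) :
    (signMerge s (insert i t) : 𝕜) = (-1) ^ (s.filter (i < ·)).card * signMerge s t := by
  simp only [signMerge, Finset.card_filter, Finset.sum_product_right, Finset.sum_insert hi,
    pow_add]

lemma signMerge_mul_self (s t : Finset (Fin n)) : (signMerge s t * signMerge s t : 𝕜) = 1 := by
  simp only [signMerge, ← pow_add, Even.neg_one_pow ⟨_, rfl⟩]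

lemma wedge_empty (α β : Form 𝕜 n) : wedge α β ∅ = α ∅ * β ∅ := by
  simp [wedge, signMerge]

/- The Leibniz rule for the contraction with `e_i`, which carries no sign on sets with least
element `i`. -/
lemma wedge_insert (α β : Form 𝕜 n) {i : Fin n} {u : Finset (Fin n)} (hu : ∀ x ∈ u, i < x) :
    wedge α β (insert i u) = wedge (fun s => α (insert i s)) β u +
      wedge (fun s => (-1) ^ s.card * α s) (fun s => β (insert i s)) u := by
  have hi : i ∉ u := fun h => lt_irrefl _ (hu i h)
  rw [wedge, Finset.sum_powerset_insert hi, add_comm]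
  congr 1 <;> refine Finset.sum_congr rfl fun s hs => ?_ <;>
    have hsu := Finset.mem_powerset.mp hs <;> have his : i ∉ s := fun h => hi (hsu h)
  · have hlt : (u \ s).filter (· < i) = ∅ :=
      Finset.filter_eq_empty_iff.mpr fun x hx => (hu x (Finset.sdiff_subset hx)).not_gt
    rw [Finset.insert_sdiff_insert, Finset.sdiff_insert_of_notMem hi, signMerge_insert_left his,
      hlt, Finset.card_empty, pow_zero, one_mul]
  · have hgt : s.filter (i < ·) = s := Finset.filter_true_of_mem fun x hx => hu x (hsu hx)
    rw [Finset.insert_sdiff_of_notMem _ his, signMerge_insert_right (by simp [hi]), hgt]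
    ring

lemma wedge_singleton (α β : Form 𝕜 n) (i : Fin n) :
    wedge α β {i} = α {i} * β ∅ + α ∅ * β {i} := by
  rw [← insert_empty_eq i, wedge_insert α β (by simp), wedge_empty, wedge_empty]
  simp

lemma isGrade.add {k : ℕ} {α β : Form 𝕜 n} (hα : isGrade k α) (hβ : isGrade k β) :
    isGrade k (α + β) := fun s hs => by
  rw [Pi.add_apply, hα s hs, hβ s hs, add_zero]

lemma isGrade.smul {k : ℕ} {α : Form 𝕜 n} (hα : isGrade k α) (c : 𝕜) : isGrade k (c • α) :=
  fun s hs => by rw [Pi.smul_apply, hα s hs, smul_zero]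

lemma isGrade.sum {ι : Type*} {k : ℕ} {α : ι → Form 𝕜 n} (t : Finset ι)
    (hα : ∀ i ∈ t, isGrade k (α i)) : isGrade k (∑ i ∈ t, α i) := fun s hs => by
  rw [Finset.sum_apply, Finset.sum_eq_zero fun i hi => hα i hi s hs]

lemma wedge_apply_eq_zero_of_card_inter_ne {α β : Form 𝕜 n} {B : Finset (Fin n)} {k l : ℕ}
    (hα : ∀ s, (s ∩ B).card ≠ k → α s = 0) (hβ : ∀ s, (s ∩ B).card ≠ l → β s = 0)
    {u : Finset (Fin n)} (hu : (u ∩ B).card ≠ k + l) : wedge α β u = 0 :=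
  Finset.sum_eq_zero fun s hs => by
  have hcard : ((u \ s) ∩ B).card + (s ∩ B).card = (u ∩ B).card := by
    rw [← Finset.card_union_of_disjoint (Finset.sdiff_disjoint.mono inf_le_left inf_le_left),
      ← Finset.union_inter_distrib_right, Finset.sdiff_union_of_subset (Finset.mem_powerset.mp hs)]
  by_cases h : (s ∩ B).card = k
  · rw [hβ (u \ s) (by omega), mul_zero]
  · rw [hα s h, mul_zero, zero_mul]

lemma isGrade.wedge {k l : ℕ} {α β : Form 𝕜 n} (hα : isGrade k α) (hβ : isGrade l β) :
    isGrade (k + l) (wedge α β) := fun u hu =>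
  wedge_apply_eq_zero_of_card_inter_ne (B := Finset.univ) (by simpa [isGrade] using hα)
    (by simpa [isGrade] using hβ) (by simpa using hu)

lemma isGrade.hstar {k : ℕ} {α : Form 𝕜 n} (hα : isGrade k α) : isGrade (n - k) (hstar α) :=
  fun s hs => by
  have hcard : sᶜ.card = n - s.card := by rw [Finset.card_compl, Fintype.card_fin]
  have hle : s.card ≤ n := card_finset_fin_le s
  rw [FMpaper.hstar, hα sᶜ (by omega), mul_zero]

lemma isGrade_e1 (i : Fin n) : isGrade 1 (e1 i : Form 𝕜 n) := fun _ hs =>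
  if_neg fun h => hs (by rw [h, Finset.card_singleton])

lemma isGrade.eq_zero_iff_compl_singleton {α : Form 𝕜 (n + 1)} (hα : isGrade n α) :
    α = 0 ↔ ∀ k, α {k}ᶜ = 0 := by
  refine ⟨fun h k => congrFun h _, fun h => funext fun s => ?_⟩
  by_cases hs : s.card = n
  · obtain ⟨k, hk⟩ : ∃ k, sᶜ = {k} := Finset.card_eq_one.mp <| by
      rw [Finset.card_compl, Fintype.card_fin, hs, Nat.add_sub_cancel_left]
    rw [← compl_compl s, hk, h k, Pi.zero_apply]
  · exact hα s hs

lemma wedge_apply_pair {α β : Form 𝕜 n} (hα : isGrade 1 α) (hβ : isGrade 1 β) {i j : Fin n}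
    (hij : i < j) : wedge α β {i, j} = α {i} * β {j} - α {j} * β {i} := by
  have hα₀ : α ∅ = 0 := hα _ (by simp)
  have hβ₀ : β ∅ = 0 := hβ _ (by simp)
  rw [← insert_empty_eq j, wedge_insert _ _ (by simpa using hij), wedge_insert _ _ (by simp),
    wedge_insert _ _ (by simp)]
  simp [wedge_empty, hα₀, hβ₀, sub_eq_add_neg]

lemma e1_wedge_e1_apply_pair (i j : Fin n) {k l : Fin n} (hkl : k < l) :
    wedge (e1 i) (e1 j) {k, l} =
      ((if k = i then 1 else 0) * (if l = j then 1 else 0) -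
        (if l = i then 1 else 0) * (if k = j then 1 else 0) : 𝕜) := by
  simp only [wedge_apply_pair (isGrade_e1 i) (isGrade_e1 j) hkl, e1, Finset.singleton_inj]

lemma e1_wedge_e1_apply_of_ne {i j : Fin n} {s : Finset (Fin n)} (hs : s ≠ {i, j}) :
    wedge (e1 i) (e1 j) s = (0 : 𝕜) := Finset.sum_eq_zero fun t ht => by
  by_cases hi : t = {i}
  · have hj : s \ t ≠ {j} := fun hj => hs <| by
      rw [← Finset.union_sdiff_of_subset (Finset.mem_powerset.mp ht), hi, ← hi, hj, hi]; rfl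
    simp [e1, hj]
  · simp [e1, hi]

lemma isGrade.apply_insert_insert_of_nonempty {α : Form 𝕜 n} (hα : isGrade 2 α) {i j : Fin n}
    {s : Finset (Fin n)} (hij : i < j) (hjs : ∀ x ∈ s, j < x) (hs : s.Nonempty) :
    α (insert i (insert j s)) = 0 := hα _ <| by
  have hj : j ∉ s := fun h => lt_irrefl j (hjs j h)
  have hi : i ∉ insert j s := by
    simpa [hij.ne] using fun h => (hij.trans (hjs i h)).false
  have hpos := hs.card_pos
  rw [Finset.card_insert_of_notMem hi, Finset.card_insert_of_notMem hj]
  omega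

lemma isGrade.wedge_apply_four {α : Form 𝕜 n} (hα : isGrade 2 α) (β : Form 𝕜 n) {i j k l : Fin n}
    (hij : i < j) (hjk : j < k) (hkl : k < l) :
    FMpaper.wedge α β {i, j, k, l} =
      α {i, j} * β {k, l} - α {i, k} * β {j, l} + α {i, l} * β {j, k}
      + α {j, k} * β {i, l} - α {j, l} * β {i, k} + α {k, l} * β {i, j} := by
  have hik := hij.trans hjk
  have hjl := hjk.trans hkl
  have hil := hij.trans hjl
  have h₀ : α ∅ = 0 := hα _ (by simp)
  have h₁ (a) : α {a} = 0 := hα _ (by simp)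
  have hcard {a b : Fin n} (hab : a < b) : ({a, b} : Finset (Fin n)).card = 2 :=
    Finset.card_pair hab.ne
  simp only [wedge_insert, wedge_singleton, hα.apply_insert_insert_of_nonempty,
    Finset.mem_insert, Finset.mem_singleton, forall_eq_or_imp, forall_eq, and_self,
    Finset.insert_nonempty, Finset.singleton_nonempty, insert_empty_eq, Finset.card_singleton,
    Finset.card_empty, zero_mul, mul_zero, zero_add, add_zero, *]
  ring

lemma isGrade.wedge_apply_six {α : Form 𝕜 n} (hα : isGrade 2 α) (β : Form 𝕜 n)
    {i j k l p q : Fin n} (hij : i < j) (hjk : j < k) (hkl : k < l) (hlp : l < p) (hpq : p < q) :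
    FMpaper.wedge α β {i, j, k, l, p, q} =
      α {i, j} * β {k, l, p, q} - α {i, k} * β {j, l, p, q} + α {i, l} * β {j, k, p, q}
      - α {i, p} * β {j, k, l, q} + α {i, q} * β {j, k, l, p} + α {j, k} * β {i, l, p, q}
      - α {j, l} * β {i, k, p, q} + α {j, p} * β {i, k, l, q} - α {j, q} * β {i, k, l, p}
      + α {k, l} * β {i, j, p, q} - α {k, p} * β {i, j, l, q} + α {k, q} * β {i, j, l, p}
      + α {l, p} * β {i, j, k, q} - α {l, q} * β {i, j, k, p} + α {p, q} * β {i, j, k, l} := by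
  have hik := hij.trans hjk
  have hjl := hjk.trans hkl
  have hkp := hkl.trans hlp
  have hlq := hlp.trans hpq
  have hil := hik.trans hkl
  have hjp := hjl.trans hlp
  have hkq := hkp.trans hpq
  have hip := hil.trans hlp
  have hjq := hjp.trans hpq
  have hiq := hip.trans hpq
  have h₀ : α ∅ = 0 := hα _ (by simp)
  have h₁ (a) : α {a} = 0 := hα _ (by simp)
  have hcard {a b : Fin n} (hab : a < b) : ({a, b} : Finset (Fin n)).card = 2 :=
    Finset.card_pair hab.ne
  simp only [wedge_insert, wedge_singleton, hα.apply_insert_insert_of_nonempty,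
    Finset.mem_insert, Finset.mem_singleton, forall_eq_or_imp, forall_eq, and_self,
    Finset.insert_nonempty, Finset.singleton_nonempty, insert_empty_eq, Finset.card_singleton,
    Finset.card_empty, zero_mul, mul_zero, zero_add, add_zero, *]
  ring

lemma wedge_hstar_compl_singleton (α β : Form 𝕜 n) (k : Fin n) :
    wedge α (hstar β) {k}ᶜ = (-1) ^ (k : ℕ) * inner' α (iprodB k β) := by
  rw [wedge, inner', Finset.mul_sum]
  refine Finset.sum_subset_zero_on_sdiff (Finset.subset_univ _) (fun S hS => ?_) fun S hS => ?_
  · have hk : k ∈ S := by simpa using hS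
    simp [iprodB, hk]
  have hk : k ∉ S := by simpa using Finset.mem_powerset.mp hS
  set T := {k}ᶜ \ S with hT
  have hTc : Tᶜ = insert k S := by ext; simp [hT]; tauto
  have hcard : (T.filter (· < k)).card + (S.filter (· < k)).card = k := by
    rw [← Fin.card_Iio k, ← Finset.card_union_of_disjoint]
    · congr 1; ext x; simp [hT]; grind
    · exact Finset.disjoint_filter_filter (Finset.sdiff_disjoint)
  have hsign : ((-1) ^ (T.filter (· < k)).card : 𝕜) =
      (-1) ^ (k : ℕ) * (-1) ^ (S.filter (· < k)).card := by
    rw [← hcard, pow_add, mul_assoc, ← pow_add, Even.neg_one_pow ⟨_, rfl⟩, mul_one]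
  rw [hstar, hTc, signMerge_insert_left hk, hsign, iprodB, if_neg hk]
  linear_combination (-1) ^ (k : ℕ) * (-1) ^ (S.filter (· < k)).card * α S * β (insert k S) *
    signMerge_mul_self (𝕜 := 𝕜) S T

lemma evalForm_add {k : ℕ} (α β : Form 𝕜 n) (v : Fin k → Fin n → 𝕜) :
    evalForm (α + β) v = evalForm α v + evalForm β v := by
  simp only [evalForm, Pi.add_apply, add_mul, Finset.sum_add_distrib]

lemma evalForm_sub {k : ℕ} (α β : Form 𝕜 n) (v : Fin k → Fin n → 𝕜) :
    evalForm (α - β) v = evalForm α v - evalForm β v := by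
  simp only [evalForm, Pi.sub_apply, sub_mul, Finset.sum_sub_distrib]

lemma evalForm_single {k : ℕ} {g : Fin k → Fin n} (hg : StrictMono g) (v : Fin k → Fin n → 𝕜) :
    evalForm (Pi.single (Finset.univ.image g) 1) v = (Matrix.of fun i j => v i (g j)).det := by
  have hcard : (Finset.univ.image g).card = k := by
    rw [Finset.card_image_of_injective _ hg.injective, Finset.card_fin]
  have hemb : g = (Finset.univ.image g).orderEmbOfFin hcard :=
    Finset.orderEmbOfFin_unique hcard (fun i => Finset.mem_image_of_mem g (Finset.mem_univ i)) hg
  rw [evalForm, Finset.sum_eq_single (Finset.univ.image g) (fun s _ hs => by simp [hs]) (by simp),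
    Pi.single_eq_same, one_mul, dif_pos hcard]
  conv_rhs => rw [hemb]
  rfl

end ExteriorAlgebra

section CrossProduct

variable {R S : Type*} [CommRing R] [CommRing S] {m : ℕ}

/-- The generalized cross product of the `m` rows of `c`, vectors of `R^(m+1)`: its entries are the
signed maximal minors of `c`. -/
def crossProductRows (c : Matrix (Fin m) (Fin (m + 1)) R) : Fin (m + 1) → R :=
  fun a => (-1) ^ (a : ℕ) * (c.submatrix id a.succAbove).det

lemma crossProductRows_smul (r : R) (c : Matrix (Fin m) (Fin (m + 1)) R) :
    crossProductRows (r • c) = r ^ m • crossProductRows c := by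
  ext a
  simp only [crossProductRows, Matrix.submatrix_smul, Pi.smul_apply, smul_eq_mul, Matrix.det_smul,
    Fintype.card_fin]
  ring

lemma crossProductRows_map (g : R →+* S) (c : Matrix (Fin m) (Fin (m + 1)) R) :
    crossProductRows (c.map g) = g ∘ crossProductRows c := by
  ext a
  simp only [crossProductRows, Function.comp_apply, map_mul, map_pow, map_neg, map_one,
    RingHom.map_det, RingHom.mapMatrix_apply, Matrix.submatrix_map]

lemma crossProductRows_dotProduct_row (c : Matrix (Fin m) (Fin (m + 1)) R) (j : Fin m) :
    crossProductRows c ⬝ᵥ c j = 0 := by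
  have hdet : (Matrix.of (Fin.cons (c j) c : Fin (m + 1) → Fin (m + 1) → R)).det = 0 :=
    Matrix.det_zero_of_row_eq (Fin.succ_ne_zero j).symm rfl
  rw [← hdet, Matrix.det_succ_row_zero, dotProduct]
  refine Finset.sum_congr rfl fun a _ => ?_
  rw [crossProductRows, mul_right_comm]
  rfl

/-- The Fueter (Dirac) operator `∑ J_j ∂_j f` of Harvey and Lawson, as a function of the matrix
`c j a = ∂_j f^a`. Its signs come from `φ = dx^{123} + ∑ dx^j ∧ ω_j`: the entry at `a` is
`-∑ ω_j(∂_a, ∂_b) c j b`. -/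
def fueter (c : Matrix (Fin 3) (Fin 4) R) : Fin 4 → R :=
  ![-c 0 1 - c 1 2 + c 2 3, c 0 0 + c 1 3 + c 2 2, -c 0 3 + c 1 0 - c 2 1, c 0 2 - c 1 1 - c 2 0]

lemma fueter_smul (r : R) (c : Matrix (Fin 3) (Fin 4) R) : fueter (r • c) = r • fueter c := by
  ext a
  fin_cases a <;> simp [fueter, mul_add, mul_sub]

lemma fueter_map (g : R →+* S) (c : Matrix (Fin 3) (Fin 4) R) :
    fueter (c.map g) = g ∘ fueter c := by
  ext a
  fin_cases a <;> simp [fueter]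

end CrossProduct

section FibreIsotropic

variable {𝕜 : Type*} [NormedField 𝕜]

/-- A 2-form on `ℝ³ × ℝ⁴` for which the fibres `{x} × ℝ⁴` are isotropic, as the curvature of a real
Fourier–Mukai transform is. -/
structure IsFibreIsotropic (F : Form 𝕜 7) : Prop where
  grade : isGrade 2 F
  apply_ya_ya : ∀ a b, F {ya a, ya b} = 0

/-- The coefficients of the terms `dx^j ∧ dy^a` of a 2-form on `ℝ³ × ℝ⁴`. -/
def mixedPart (F : Form 𝕜 7) : Matrix (Fin 3) (Fin 4) 𝕜 :=
  Matrix.of fun j a => F {xj j, ya a}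

lemma xj_lt_xj {i j : Fin 3} (h : i < j) : xj i < xj j := h

lemma ya_lt_ya {a b : Fin 4} (h : a < b) : ya a < ya b := Nat.add_lt_add_right h 3

lemma xj_lt_ya (j : Fin 3) (a : Fin 4) : xj j < ya a := j.isLt.trans_le (Nat.le_add_left 3 a)

lemma forall_fin_seven_iff {P : Fin 7 → Prop} : (∀ k, P k) ↔ (∀ j, P (xj j)) ∧ ∀ a, P (ya a) := by
  refine ⟨fun h => ⟨fun j => h _, fun a => h _⟩, fun ⟨hx, hy⟩ k => ?_⟩
  fin_cases k
  exacts [hx 0, hx 1, hx 2, hy 0, hy 1, hy 2, hy 3]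

lemma compl_singleton_xj (j : Fin 3) : ({xj j}ᶜ : Finset (Fin 7)) =
    {xj (j.succAbove 0), xj (j.succAbove 1), ya 0, ya 1, ya 2, ya 3} := by
  revert j; decide

lemma compl_singleton_ya (a : Fin 4) : ({ya a}ᶜ : Finset (Fin 7)) =
    {xj 0, xj 1, xj 2, ya (a.succAbove 0), ya (a.succAbove 1), ya (a.succAbove 2)} := by
  revert a; decide

namespace IsFibreIsotropic

variable {F : Form 𝕜 7}

lemma forall_apply_xj_xj_iff (hF : IsFibreIsotropic F) :
    (∀ i j, F {xj i, xj j} = 0) ↔ ∀ j : Fin 3, F {xj (j.succAbove 0), xj (j.succAbove 1)} = 0 := by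
  refine ⟨fun h j => h _ _, fun h i j => ?_⟩
  have hdiag (i) : F {xj i, xj i} = 0 := hF.grade _ (by simp)
  have h₀ : F {xj 1, xj 2} = 0 := h 0
  have h₁ : F {xj 0, xj 2} = 0 := h 1
  have h₂ : F {xj 0, xj 1} = 0 := h 2
  fin_cases i <;> fin_cases j <;>
    first | exact hdiag _ | assumption | (rw [Finset.pair_comm]; assumption)

lemma wedge_self_apply_xj_xj_ya_ya (hF : IsFibreIsotropic F) {i j : Fin 3} {a b : Fin 4}
    (hij : i < j) (hab : a < b) : wedge F F {xj i, xj j, ya a, ya b} =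
      2 * (mixedPart F i b * mixedPart F j a - mixedPart F i a * mixedPart F j b) := by
  rw [hF.grade.wedge_apply_four F (xj_lt_xj hij) (xj_lt_ya j a) (ya_lt_ya hab), hF.apply_ya_ya]
  simp only [mixedPart, Matrix.of_apply]
  ring

lemma wedge_self_apply_xj_ya_ya_ya (hF : IsFibreIsotropic F) (j : Fin 3) {a b c : Fin 4}
    (hab : a < b) (hbc : b < c) : wedge F F {xj j, ya a, ya b, ya c} = 0 := by
  rw [hF.grade.wedge_apply_four F (xj_lt_ya j a) (ya_lt_ya hab) (ya_lt_ya hbc)]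
  simp only [hF.apply_ya_ya, mul_zero, zero_mul, add_zero, sub_zero]

lemma wedge_self_apply_ya (hF : IsFibreIsotropic F) {a b c d : Fin 4}
    (hab : a < b) (hbc : b < c) (hcd : c < d) : wedge F F {ya a, ya b, ya c, ya d} = 0 := by
  rw [hF.grade.wedge_apply_four F (ya_lt_ya hab) (ya_lt_ya hbc) (ya_lt_ya hcd)]
  simp only [hF.apply_ya_ya, mul_zero, add_zero, sub_zero]

lemma wedge_cube_compl_xj (hF : IsFibreIsotropic F) (j : Fin 3) :
    wedge F (wedge F F) {xj j}ᶜ = 0 := by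
  have hj : j.succAbove 0 < j.succAbove 1 := Fin.strictMono_succAbove j (by decide)
  rw [compl_singleton_xj, hF.grade.wedge_apply_six _ (xj_lt_xj hj) (xj_lt_ya _ _)
    (ya_lt_ya (by decide)) (ya_lt_ya (by decide)) (ya_lt_ya (by decide))]
  simp (decide := true) only [hF.apply_ya_ya, hF.wedge_self_apply_ya,
    hF.wedge_self_apply_xj_ya_ya_ya, mul_zero, zero_mul, add_zero, sub_zero]

lemma wedge_cube_compl_ya (hF : IsFibreIsotropic F) (a : Fin 4) :
    wedge F (wedge F F) {ya a}ᶜ =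
      6 * ((-1) ^ ((a : ℕ) + 1) * crossProductRows (mixedPart F) a) := by
  have h₀₁ : a.succAbove 0 < a.succAbove 1 := Fin.strictMono_succAbove a (by decide)
  have h₁₂ : a.succAbove 1 < a.succAbove 2 := Fin.strictMono_succAbove a (by decide)
  have hx₀₁ : (0 : Fin 3) < 1 := by decide
  have hx₀₂ : (0 : Fin 3) < 2 := by decide
  have hx₁₂ : (1 : Fin 3) < 2 := by decide
  have hminor : wedge F (wedge F F) {ya a}ᶜ =
      -6 * ((mixedPart F).submatrix id a.succAbove).det := by
    rw [compl_singleton_ya, hF.grade.wedge_apply_six _ (xj_lt_xj hx₀₁) (xj_lt_xj hx₁₂)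
      (xj_lt_ya _ _) (ya_lt_ya h₀₁) (ya_lt_ya h₁₂)]
    simp only [hF.wedge_self_apply_xj_xj_ya_ya, hF.wedge_self_apply_xj_ya_ya_ya, hF.apply_ya_ya,
      h₀₁, h₁₂, h₀₁.trans h₁₂, hx₀₁, hx₀₂, hx₁₂, Matrix.det_fin_three, Matrix.submatrix_apply,
      id_eq, mixedPart, Matrix.of_apply]
    ring
  have hsign : ((-1) ^ ((a : ℕ) + 1) * (-1) ^ (a : ℕ) : 𝕜) = -1 := by
    rw [pow_succ', mul_assoc, ← pow_add, Even.neg_one_pow ⟨_, rfl⟩, mul_one]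
  rw [hminor, crossProductRows, ← mul_assoc ((-1) ^ ((a : ℕ) + 1)), hsign, neg_one_mul, neg_mul,
    mul_neg]

lemma wedge_psi7_compl_xj (hF : IsFibreIsotropic F) (j : Fin 3) :
    wedge F psi7 {xj j}ᶜ = F {xj (j.succAbove 0), xj (j.succAbove 1)} := by
  have hj : j.succAbove 0 < j.succAbove 1 := Fin.strictMono_succAbove j (by decide)
  rw [compl_singleton_xj, hF.grade.wedge_apply_six _ (xj_lt_xj hj) (xj_lt_ya _ _)
    (ya_lt_ya (by decide)) (ya_lt_ya (by decide)) (ya_lt_ya (by decide))]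
  fin_cases j <;> simp (decide := true) [hF.apply_ya_ya, psi7]

lemma wedge_psi7_compl_ya (hF : IsFibreIsotropic F) (a : Fin 4) :
    wedge F psi7 {ya a}ᶜ = (-1) ^ ((a : ℕ) + 1) * fueter (mixedPart F) a := by
  have h₀₁ : a.succAbove 0 < a.succAbove 1 := Fin.strictMono_succAbove a (by decide)
  have h₁₂ : a.succAbove 1 < a.succAbove 2 := Fin.strictMono_succAbove a (by decide)
  rw [compl_singleton_ya, hF.grade.wedge_apply_six _ (xj_lt_xj (by decide)) (xj_lt_xj (by decide))
    (xj_lt_ya _ _) (ya_lt_ya h₀₁) (ya_lt_ya h₁₂)]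
  simp only [hF.apply_ya_ya, zero_mul, add_zero, sub_zero]
  fin_cases a <;>
    simp (decide := true) only [psi7, ↓reduceIte, Fin.succAbove, Fin.isValue, Fin.succ_zero_eq_one,
      Fin.succ_one_eq_two, Fin.reduceSucc, Fin.castSucc_zero, Fin.castSucc_one, Fin.reduceCastSucc,
      fueter, mixedPart, Matrix.of_apply, Matrix.cons_val, Fin.zero_eta, Fin.mk_one,
      Fin.reduceFinMk] <;>
    ring

end IsFibreIsotropic

end FibreIsotropic

section CalibrationForms

variable {𝕜 : Type*} [NormedField 𝕜]

lemma isGrade_phi7 : isGrade 3 (phi7 : Form 𝕜 7) := fun s hs => by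
  unfold phi7
  split_ifs with h
  all_goals first | rfl | exact absurd (by subst s; rfl) hs

lemma isGrade_psi7 : isGrade 4 (psi7 : Form 𝕜 7) := fun s hs => by
  unfold psi7
  split_ifs with h
  all_goals first | rfl | exact absurd (by subst s; rfl) hs

lemma inner'_phi7 (β : Form 𝕜 7) : inner' phi7 β =
    β {xj 0, xj 1, xj 2} + β {xj 0, ya 0, ya 1} + β {xj 0, ya 2, ya 3} + β {xj 1, ya 0, ya 2} -
      β {xj 1, ya 1, ya 3} - β {xj 2, ya 0, ya 3} - β {xj 2, ya 1, ya 2} := by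
  have hsupp : ∀ s ∉ ({{0, 1, 2}, {0, 3, 4}, {0, 5, 6}, {1, 3, 5}, {1, 4, 6}, {2, 3, 6},
      {2, 4, 5}} : Finset (Finset (Fin 7))), phi7 s * β s = 0 := fun s hs => by
    simp only [Finset.mem_insert, Finset.mem_singleton, not_or] at hs
    simp only [phi7, hs, if_false, zero_mul]
  rw [inner', ← Finset.sum_subset (Finset.subset_univ _) fun s _ => hsupp s]
  simp (decide := true) [phi7, Finset.sum_insert, xj, ya, sub_eq_add_neg, add_assoc]

lemma psi7_eq_single : (psi7 : Form 𝕜 7) =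
    Pi.single (Finset.univ.image ![3, 4, 5, 6]) 1 +
      Pi.single (Finset.univ.image ![1, 2, 5, 6]) 1 +
      Pi.single (Finset.univ.image ![1, 2, 3, 4]) 1 +
      Pi.single (Finset.univ.image ![0, 2, 4, 6]) 1 -
      Pi.single (Finset.univ.image ![0, 2, 3, 5]) 1 -
      Pi.single (Finset.univ.image ![0, 1, 4, 5]) 1 -
      Pi.single (Finset.univ.image ![0, 1, 3, 6]) 1 := by
  have him (a b c d : Fin 7) : Finset.univ.image ![a, b, c, d] = {a, b, c, d} := by
    ext; simp [Fin.exists_fin_succ, eq_comm]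
  funext s
  rw [psi7]
  simp only [him, Pi.add_apply, Pi.sub_apply]
  split_ifs
  case neg => simp only [Pi.single_eq_of_ne, add_zero, sub_zero, ne_eq, not_false_eq_true, *]
  all_goals subst s; simp (decide := true)

end CalibrationForms

namespace IsFibreIsotropic

variable {𝕜 : Type*} [NormedField 𝕜] {F : Form 𝕜 7}

lemma dDT_eq_zero_iff [CharZero 𝕜] (hF : IsFibreIsotropic F) :
    (6 : 𝕜)⁻¹ • wedge F (wedge F F) + wedge F psi7 = 0 ↔
      (∀ i j, F {xj i, xj j} = 0) ∧
        fueter (mixedPart F) + crossProductRows (mixedPart F) = 0 := by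
  have hgrade : isGrade 6 ((6 : 𝕜)⁻¹ • wedge F (wedge F F) + wedge F psi7) :=
    ((hF.grade.wedge (hF.grade.wedge hF.grade)).smul _).add (hF.grade.wedge isGrade_psi7)
  rw [hgrade.eq_zero_iff_compl_singleton, forall_fin_seven_iff, hF.forall_apply_xj_xj_iff,
    funext_iff]
  refine and_congr (forall_congr' fun j => ?_) (forall_congr' fun a => ?_)
  · rw [Pi.add_apply, Pi.smul_apply, hF.wedge_cube_compl_xj, hF.wedge_psi7_compl_xj, smul_zero,
      zero_add]
  · rw [Pi.add_apply, Pi.smul_apply, hF.wedge_cube_compl_ya, hF.wedge_psi7_compl_ya, smul_eq_mul,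
      inv_mul_cancel_left₀ (by norm_num), ← mul_add,
      mul_eq_zero_iff_left (pow_ne_zero _ (by norm_num)), Pi.add_apply, Pi.zero_apply, add_comm]

lemma phi7_wedge_hstar_wedge_self_compl_xj (hF : IsFibreIsotropic F) (j : Fin 3) :
    wedge phi7 (hstar (wedge F F)) {xj j}ᶜ =
      (-1) ^ (j : ℕ) * (2 * fueter (mixedPart F) ⬝ᵥ mixedPart F j) := by
  rw [wedge_hstar_compl_singleton, inner'_phi7]
  congr 1
  simp only [dotProduct, Fin.sum_univ_four, fueter, Matrix.cons_val]
  fin_cases j <;>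
    simp (decide := true) only [iprodB, ↓reduceIte, Fin.mk_one, Fin.zero_eta, Fin.reduceFinMk,
      Finset.insert_comm (xj 1) (xj 0), Finset.insert_comm (xj 2) (xj _),
      hF.wedge_self_apply_xj_xj_ya_ya, Odd.neg_one_pow, Even.neg_pow, one_pow] <;>
    ring

lemma apply_eq_zero_of_card_inter_image_xj_ne (hF : IsFibreIsotropic F)
    (hbase : ∀ i j, F {xj i, xj j} = 0) {s : Finset (Fin 7)}
    (hs : (s ∩ Finset.univ.image xj).card ≠ 1) : F s = 0 := by
  by_cases hcard : s.card = 2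
  · obtain ⟨k, l, -, rfl⟩ := Finset.card_eq_two.mp hcard
    have hmixed : ∀ j a, (({xj j, ya a} : Finset (Fin 7)) ∩ Finset.univ.image xj).card = 1 := by
      decide
    have hcases : ∀ k : Fin 7, (∃ j, xj j = k) ∨ ∃ a, ya a = k := by decide
    obtain ⟨⟨i, rfl⟩ | ⟨a, rfl⟩, ⟨j, rfl⟩ | ⟨b, rfl⟩⟩ := hcases k, hcases l
    · exact hbase i j
    · exact absurd (hmixed i b) hs
    · exact absurd (Finset.pair_comm (xj j) (ya a) ▸ hmixed j a) hs
    · exact hF.apply_ya_ya a b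
  · exact hF.grade s hcard

lemma phi7_wedge_hstar_wedge_self_compl_ya (hF : IsFibreIsotropic F)
    (hbase : ∀ i j, F {xj i, xj j} = 0) (a : Fin 4) :
    wedge phi7 (hstar (wedge F F)) {ya a}ᶜ = 0 := by
  have hFF (s : Finset (Fin 7)) (hs : (s ∩ Finset.univ.image xj).card ≠ 2) : wedge F F s = 0 :=
    have hF₁ _ := hF.apply_eq_zero_of_card_inter_image_xj_ne hbase
    wedge_apply_eq_zero_of_card_inter_ne hF₁ hF₁ hs
  rw [wedge_hstar_compl_singleton, inner'_phi7]
  fin_cases a <;> simp (decide := true) [iprodB, hFF]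

lemma phi7_wedge_hstar_wedge_self_eq_zero (hF : IsFibreIsotropic F)
    (hbase : ∀ i j, F {xj i, xj j} = 0)
    (hcross : fueter (mixedPart F) + crossProductRows (mixedPart F) = 0) :
    wedge phi7 (hstar (wedge F F)) = 0 := by
  have hgrade : isGrade 6 (wedge phi7 (hstar (wedge F F))) :=
    isGrade_phi7.wedge (hF.grade.wedge hF.grade).hstar
  rw [hgrade.eq_zero_iff_compl_singleton, forall_fin_seven_iff]
  refine ⟨fun j => ?_, hF.phi7_wedge_hstar_wedge_self_compl_ya hbase⟩
  rw [hF.phi7_wedge_hstar_wedge_self_compl_xj, eq_neg_of_add_eq_zero_left hcross, neg_dotProduct,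
    crossProductRows_dotProduct_row]
  ring

end IsFibreIsotropic

section Graph

variable (f : (Fin 3 → ℝ) → (Fin 4 → ℝ)) (A : (Fin 3 → ℝ) → (Fin 3 → ℝ)) (x : Fin 3 → ℝ)

/-- The matrix of partial derivatives `c j a = ∂f^a/∂x^j`, the transpose of the usual Jacobian. -/
def jacobian : Matrix (Fin 3) (Fin 4) ℝ :=
  Matrix.of (pd f x)

lemma vA_eq_vec (j : Fin 3) : vA f x j =
    ![if j = 0 then 1 else 0, if j = 1 then 1 else 0, if j = 2 then 1 else 0,
      jacobian f x j 0, jacobian f x j 1, jacobian f x j 2, jacobian f x j 3] := by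
  ext k
  fin_cases j <;> fin_cases k <;>
    simp [vA, jacobian, xj, ya, Fin.sum_univ_succ, Fin.ext_iff]

lemma evalForm_psi7_graph (w : Fin 7 → ℝ) :
    evalForm psi7 ![vA f x 0, vA f x 1, vA f x 2, w] =
      ∑ a, (fueter (jacobian f x) - crossProductRows (jacobian f x)) a *
        (w (ya a) - ∑ j, w (xj j) * jacobian f x j a) := by
  have hmono : StrictMono (![3, 4, 5, 6] : Fin 4 → Fin 7) ∧
      StrictMono (![1, 2, 5, 6] : Fin 4 → Fin 7) ∧ StrictMono (![1, 2, 3, 4] : Fin 4 → Fin 7) ∧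
      StrictMono (![0, 2, 4, 6] : Fin 4 → Fin 7) ∧ StrictMono (![0, 2, 3, 5] : Fin 4 → Fin 7) ∧
      StrictMono (![0, 1, 4, 5] : Fin 4 → Fin 7) ∧ StrictMono (![0, 1, 3, 6] : Fin 4 → Fin 7) := by
    simp only [StrictMono]; decide
  obtain ⟨h₁, h₂, h₃, h₄, h₅, h₆, h₇⟩ := hmono
  rw [psi7_eq_single]
  simp only [evalForm_add, evalForm_sub, evalForm_single h₁, evalForm_single h₂, evalForm_single h₃,
    evalForm_single h₄, evalForm_single h₅, evalForm_single h₆, evalForm_single h₇, vA_eq_vec]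
  simp only [Matrix.det_succ_row_zero, Fin.sum_univ_succ, Finset.univ_unique, Finset.sum_singleton,
    Matrix.det_unique, Fin.default_eq_zero, Fin.succAbove, crossProductRows, fueter, xj, ya,
    Matrix.of_apply, Matrix.submatrix_apply, Matrix.cons_val, Matrix.cons_val_succ, Pi.sub_apply,
    id_eq, Fin.isValue, Fin.reduceSucc, Fin.reduceCastSucc, Fin.reduceLT, Fin.reduceEq, ↓reduceIte,
    Fin.reduceCastAdd, Fin.reduceAddNat, Fin.coe_ofNat_eq_mod, Fin.succ_zero_eq_one,
    Fin.succ_one_eq_two, Fin.castSucc_zero, Fin.castSucc_one]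
  ring

lemma forall_evalForm_psi7_graph_eq_zero_iff :
    (∀ w : Fin 7 → ℝ, evalForm psi7 ![vA f x 0, vA f x 1, vA f x 2, w] = 0) ↔
      fueter (jacobian f x) = crossProductRows (jacobian f x) := by
  simp only [evalForm_psi7_graph]
  refine ⟨fun h => sub_eq_zero.mp <| funext fun a => ?_, fun h w => by simp [h]⟩
  have hx (j) : xj j ≠ ya a := (xj_lt_ya j a).ne
  have hy (b) : ya b = ya a ↔ b = a := (Fin.addNat_inj 3).trans Iff.rfl
  simpa [Pi.single_apply, hx, hy] using h (Pi.single (ya a) 1)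

lemma gammaA_apply_of_ne {s : Finset (Fin 7)} (hs : ∀ j a, s ≠ {xj j, ya a}) :
    gammaA f x s = 0 := by
  simp only [gammaA, Finset.sum_apply, Pi.smul_apply, e1_wedge_e1_apply_of_ne (hs _ _), smul_zero,
    Finset.sum_const_zero]

lemma gammaB7_apply_of_ne {s : Finset (Fin 7)} (hs : ∀ i j, s ≠ {xj i, xj j}) :
    gammaB7 A x s = 0 := by
  simp only [gammaB7, Finset.sum_apply, Pi.smul_apply, e1_wedge_e1_apply_of_ne (hs _ _), smul_zero,
    Finset.sum_const_zero]

lemma gammaA_apply_xj_ya (j : Fin 3) (a : Fin 4) : gammaA f x {xj j, ya a} = jacobian f x j a := by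
  have hxx (i) : xj j = xj i ↔ j = i := Fin.castAdd_inj
  have hyy (b) : ya a = ya b ↔ a = b := Fin.addNat_inj 3
  simp only [gammaA, Finset.sum_apply, Pi.smul_apply, e1_wedge_e1_apply_pair _ _ (xj_lt_ya j a),
    (xj_lt_ya _ _).ne, (xj_lt_ya _ _).ne', hxx, hyy, if_false]
  simp [jacobian]

lemma isGrade_gammaA : isGrade 2 (gammaA f x) := fun _ hs =>
  gammaA_apply_of_ne f x fun j a h => hs <| h ▸ Finset.card_pair (xj_lt_ya j a).ne

lemma isGrade_gammaB7 : isGrade 2 (gammaB7 A x) :=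
  isGrade.sum _ fun _ _ => isGrade.sum _ fun _ _ => ((isGrade_e1 _).wedge (isGrade_e1 _)).smul _

lemma isFibreIsotropic_curvature : IsFibreIsotropic (FB7 A x + FSA f x) where
  grade s hs := by simp [FB7, FSA, isGrade_gammaA f x s hs, isGrade_gammaB7 A x s hs]
  apply_ya_ya a b := by
    have hxy : ∀ j c, ({ya a, ya b} : Finset (Fin 7)) ≠ {xj j, ya c} := by revert a b; decide
    have hxx : ∀ i j, ({ya a, ya b} : Finset (Fin 7)) ≠ {xj i, xj j} := by revert a b; decide
    simp [FB7, FSA, gammaA_apply_of_ne f x hxy, gammaB7_apply_of_ne A x hxx]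

lemma mixedPart_curvature :
    mixedPart (FB7 A x + FSA f x) = Complex.I • (jacobian f x).map Complex.ofRealHom := by
  ext j a
  have hxx : ∀ i k, ({xj j, ya a} : Finset (Fin 7)) ≠ {xj i, xj k} := by revert j a; decide
  simp [mixedPart, FB7, FSA, gammaA_apply_xj_ya, gammaB7_apply_of_ne A x hxx]

lemma FB7_eq_zero_iff_curvature_apply_xj_xj :
    FB7 A x = 0 ↔ ∀ i j, (FB7 A x + FSA f x) {xj i, xj j} = 0 := by
  have hFSA (i j) : FSA f x {xj i, xj j} = 0 := by
    have hxy : ∀ k a, ({xj i, xj j} : Finset (Fin 7)) ≠ {xj k, ya a} := by revert i j; decide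
    simp [FSA, gammaA_apply_of_ne f x hxy]
  simp only [Pi.add_apply, hFSA, add_zero]
  refine ⟨fun h i j => congrFun h _, fun h => funext fun s => ?_⟩
  by_cases hs : ∃ i j, s = {xj i, xj j}
  · obtain ⟨i, j, rfl⟩ := hs
    exact h i j
  · push Not at hs
    simp [FB7, gammaB7_apply_of_ne A x hs]

lemma fueter_add_crossProductRows_I_smul_eq_zero_iff (c : Matrix (Fin 3) (Fin 4) ℝ) :
    fueter (Complex.I • c.map Complex.ofRealHom) +
      crossProductRows (Complex.I • c.map Complex.ofRealHom) = 0 ↔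
      fueter c = crossProductRows c := by
  have hinj : Function.Injective (Complex.ofRealHom ∘ · : (Fin 4 → ℝ) → Fin 4 → ℂ) :=
    Complex.ofReal_injective.comp_left
  rw [fueter_smul, crossProductRows_smul, Complex.I_pow_three, neg_smul, ← sub_eq_add_neg,
    ← smul_sub, smul_eq_zero_iff_right Complex.I_ne_zero, sub_eq_zero, fueter_map,
    crossProductRows_map]
  exact hinj.eq_iff

end Graph

theorem statement8_general (f : (Fin 3 → ℝ) → (Fin 4 → ℝ)) (A : (Fin 3 → ℝ) → (Fin 3 → ℝ))
    (x : Fin 3 → ℝ) (hf : DifferentiableAt ℝ f x) (hA : DifferentiableAt ℝ A x) :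
    List.TFAE [
      (∀ w : Fin 7 → ℝ, evalForm psi7 ![vA f x 0, vA f x 1, vA f x 2, w] = 0) ∧ FB7 A x = 0,
      (6 : ℂ)⁻¹ • wedge (FB7 A x + FSA f x) (wedge (FB7 A x + FSA f x) (FB7 A x + FSA f x)) +
        wedge (FB7 A x + FSA f x) psi7 = 0,
      (6 : ℂ)⁻¹ • wedge (FB7 A x + FSA f x) (wedge (FB7 A x + FSA f x) (FB7 A x + FSA f x)) +
        wedge (FB7 A x + FSA f x) psi7 = 0 ∧
        wedge phi7 (hstar (wedge (FB7 A x + FSA f x) (FB7 A x + FSA f x))) = 0] := by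
  have hF := isFibreIsotropic_curvature f A x
  tfae_have 1 ↔ 2 := by
    rw [hF.dDT_eq_zero_iff, mixedPart_curvature, fueter_add_crossProductRows_I_smul_eq_zero_iff,
      forall_evalForm_psi7_graph_eq_zero_iff, FB7_eq_zero_iff_curvature_apply_xj_xj f, and_comm]
  tfae_have 2 → 3 := fun h =>
    have ⟨hbase, hcross⟩ := hF.dDT_eq_zero_iff.mp h
    ⟨h, hF.phi7_wedge_hstar_wedge_self_eq_zero hbase hcross⟩
  tfae_have 3 → 2 := And.left
  tfae_finish

/-- Proposition 4.4.  The following are equivalent: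
(1) the graph `S` is associative with an appropriate orientation and `∇^B` is flat
    (`F_∇^B = 0`);
(2) `F_∇³/6 + F_∇ ∧ *₇φ = 0` on `B`;
(3) `F_∇³/6 + F_∇ ∧ *₇φ = 0` and `φ ∧ *₇(F_∇²) = 0` on `B`,
where `F_∇ = F_∇^B + F_∇^S`. -/
theorem statement8 (B : Set (Fin 3 → ℝ)) (hB : IsOpen B)
    (f : (Fin 3 → ℝ) → (Fin 4 → ℝ)) (hf : ContDiffOn ℝ (⊤ : ℕ∞) f B)
    (A : (Fin 3 → ℝ) → (Fin 3 → ℝ)) (hA : ContDiffOn ℝ (⊤ : ℕ∞) A B) :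
    (((∀ x ∈ B, ∀ w : Fin 7 → ℝ,
        evalForm psi7 ![vA f x 0, vA f x 1, vA f x 2, w] = 0) ∧
      (∀ x ∈ B, FB7 A x = 0)) ↔
      (∀ x ∈ B,
        (6 : ℂ)⁻¹ • wedge (FB7 A x + FSA f x)
            (wedge (FB7 A x + FSA f x) (FB7 A x + FSA f x)) +
          wedge (FB7 A x + FSA f x) psi7 = 0)) ∧
    (((∀ x ∈ B, ∀ w : Fin 7 → ℝ,
        evalForm psi7 ![vA f x 0, vA f x 1, vA f x 2, w] = 0) ∧
      (∀ x ∈ B, FB7 A x = 0)) ↔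
      (∀ x ∈ B,
        ((6 : ℂ)⁻¹ • wedge (FB7 A x + FSA f x)
            (wedge (FB7 A x + FSA f x) (FB7 A x + FSA f x)) +
          wedge (FB7 A x + FSA f x) psi7 = 0) ∧
        wedge phi7 (hstar (wedge (FB7 A x + FSA f x) (FB7 A x + FSA f x))) = 0)) := by
  have h x (hx : x ∈ B) := statement8_general f A x
    ((hf.contDiffAt (hB.mem_nhds hx)).differentiableAt (by simp))
    ((hA.contDiffAt (hB.mem_nhds hx)).differentiableAt (by simp))
  simp only [← forall₂_and]
  exact ⟨forall₂_congr fun x hx => (h x hx).out 0 1, forall₂_congr fun x hx => (h x hx).out 0 2⟩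

end FMpaper
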